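/- Let n ≥ 1 be a natural number, η > 0, r ≥ 1 and b ∈ ℝ, and let w ∈ ℝ^n with ∑_{k=1}^n w_k² = 1. Then r·Φ(−η·∑_{k=1}^n w_k − b) + Φ(−η·∑_{k=1}^n w_k + b) ≥ r·Φ(−√n·η − b) + Φ(−√n·η + b). (Lemma 1: among unit-norm weight vectors, the uniform weight vector w = (1/√n, …, 1/√n) minimizes the overall standard error of the linear classifier on the Gaussian mixture, i.e. the optimal natural classifier has equal weights w₁ = w₂ = ⋯ = w_n.) -/

import Mathlib

open MeasureTheory ProbabilityTheory

/-- The standard normal CDF, real-valued. -/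
noncomputable def stdNormalCDF (t : ℝ) : ℝ := (gaussianReal 0 1 (Set.Iic t)).toReal

lemma stdNormalCDF_eq_cdf : stdNormalCDF = cdf (gaussianReal 0 1) :=
  funext fun t => (cdf_eq_real (gaussianReal 0 1) t).symm

lemma monotone_stdNormalCDF : Monotone stdNormalCDF :=
  stdNormalCDF_eq_cdf ▸ monotone_cdf (gaussianReal 0 1)

/-- The overall standard error, scaled by `r + 1`, of a linear classifier with bias `b` on a mixture
with class ratio `r : 1`. The score `∑ k, w k * x k` has mean `m` on class `+1` and `-m` on class
`-1`, and `F` is the CDF of its centred noise, assumed symmetric so that `P(noise > m - b)` can be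
written as `F (-m + b)`. -/
def scaledStandardError (F : ℝ → ℝ) (r b m : ℝ) : ℝ :=
  r * F (-m - b) + F (-m + b)

lemma antitone_scaledStandardError {F : ℝ → ℝ} (hF : Monotone F) {r : ℝ} (hr : 0 ≤ r) (b : ℝ) :
    Antitone (scaledStandardError F r b) := by
  intro m₁ m₂ hm
  have pos_class_le : F (-m₂ - b) ≤ F (-m₁ - b) := hF (by gcongr)
  have neg_class_le : F (-m₂ + b) ≤ F (-m₁ + b) := hF (by gcongr)
  exact add_le_add (mul_le_mul_of_nonneg_left pos_class_le hr) neg_class_le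

lemma sum_le_sqrt_card_mul_sum_sq {ι : Type*} (s : Finset ι) (w : ι → ℝ) :
    ∑ k ∈ s, w k ≤ √(s.card * ∑ k ∈ s, w k ^ 2) :=
  Real.le_sqrt_of_sq_le sq_sum_le_card_mul_sum_sq

theorem uniform_weights_minimize_standard_error_general {ι : Type*} (s : Finset ι) {F : ℝ → ℝ}
    (hF : Monotone F) {η r : ℝ} (hη : 0 ≤ η) (hr : 0 ≤ r) (b : ℝ) (w : ι → ℝ) :
    scaledStandardError F r b (η * √(s.card * ∑ k ∈ s, w k ^ 2)) ≤
      scaledStandardError F r b (η * ∑ k ∈ s, w k) :=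
  antitone_scaledStandardError hF hr b <|
    mul_le_mul_of_nonneg_left (sum_le_sqrt_card_mul_sum_sq s w) hη

/-- Lemma 1: among unit-norm weight vectors, the uniform weight vector minimizes the
overall standard error of the linear classifier on the Gaussian mixture. -/
theorem uniform_weights_minimize_standard_error (n : ℕ) (hn : 1 ≤ n) (η r b : ℝ)
    (hη : 0 < η) (hr : 1 ≤ r) (w : Fin n → ℝ) (hw : ∑ k, (w k) ^ 2 = 1) :
    r * stdNormalCDF (-η * ∑ k, w k - b) + stdNormalCDF (-η * ∑ k, w k + b) ≥
      r * stdNormalCDF (-Real.sqrt n * η - b) + stdNormalCDF (-Real.sqrt n * η + b) := by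
  simpa [scaledStandardError, hw, mul_comm] using
    uniform_weights_minimize_standard_error_general Finset.univ monotone_stdNormalCDF hη.le
      (zero_le_one.trans hr) b w
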